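/- Let ρ > 0, let ψ : ℝ^d → ℝ be differentiable and ρ-strongly convex, let L ≥ 0, let g : ℝ^d → ℝ be L-Lipschitz, let f : ℝ^d → ℝ be measurable with 0 < ∫_{ℝ^d} e^{−(f+g)(x)} dx < ∞, and let λ > 0. Let π be the probability measure with Lebesgue density proportional to e^{−(f+g)} and let π_λ^ψ be the probability measure with Lebesgue density proportional to e^{−(f + env_{λ,g}^ψ)}, where env_{λ,g}^ψ denotes either the left or the right Bregman–Moreau envelope of g. Then ‖π_λ^ψ − π‖_TV ≤ λ·L²/ρ. -/

import Mathlib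

open scoped RealInnerProductSpace ENNReal
open MeasureTheory

/-- The Bregman divergence associated with a differentiable function `ψ`. -/
noncomputable def bregmanDiv {d : ℕ} (ψ : EuclideanSpace ℝ (Fin d) → ℝ)
    (x y : EuclideanSpace ℝ (Fin d)) : ℝ :=
  ψ x - ψ y - ⟪gradient ψ y, x - y⟫

/-- The left Bregman–Moreau envelope of `g` associated with `ψ`. -/
noncomputable def leftEnv {d : ℕ} (ψ g : EuclideanSpace ℝ (Fin d) → ℝ) (lam : ℝ)
    (x : EuclideanSpace ℝ (Fin d)) : ℝ :=
  ⨅ y : EuclideanSpace ℝ (Fin d), (g y + (1 / lam) * bregmanDiv ψ y x)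

/-- The right Bregman–Moreau envelope of `g` associated with `ψ`. -/
noncomputable def rightEnv {d : ℕ} (ψ g : EuclideanSpace ℝ (Fin d) → ℝ) (lam : ℝ)
    (x : EuclideanSpace ℝ (Fin d)) : ℝ :=
  ⨅ y : EuclideanSpace ℝ (Fin d), (g y + (1 / lam) * bregmanDiv ψ x y)

/-- The total variation distance `sup_{A Borel} |μ(A) − ν(A)|`. -/
noncomputable def tvDist {α : Type*} [MeasurableSpace α] (μ ν : Measure α) : ℝ :=
  ⨆ A : {A : Set α // MeasurableSet A}, |(μ A.1).toReal - (ν A.1).toReal|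

lemma bregmanDiv_self {d : ℕ} (ψ : EuclideanSpace ℝ (Fin d) → ℝ) (x : EuclideanSpace ℝ (Fin d)) :
    bregmanDiv ψ x x = 0 := by
  simp [bregmanDiv]

/-- If `B` vanishes at `x` and grows at least quadratically away from `x`, then the infimum of
`g + B / λ` is within `λ L² / (2ρ)` below `g x` for every `L`-Lipschitz `g`. -/
lemma iInf_add_mul_mem_Icc {E : Type*} [NormedAddCommGroup E] {g B : E → ℝ} {ρ L lam : ℝ}
    (hρ : 0 < ρ) (hlam : 0 < lam) (hg : ∀ x y, |g x - g y| ≤ L * ‖x - y‖) {x : E}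
    (hx : B x = 0) (hB : ∀ y, ρ / 2 * ‖x - y‖ ^ 2 ≤ B y) :
    (⨅ y, (g y + (1 / lam) * B y)) ∈ Set.Icc (g x - lam * L ^ 2 / (2 * ρ)) (g x) := by
  have lower : ∀ y, g x - lam * L ^ 2 / (2 * ρ) ≤ g y + (1 / lam) * B y := by
    intro y
    have hLip := (le_abs_self _).trans (hg x y)
    have hquad : (1 / lam) * (ρ / 2 * ‖x - y‖ ^ 2) ≤ (1 / lam) * B y := by
      gcongr
      exact hB y
    have hsq : (1 / lam) * (ρ / 2 * ‖x - y‖ ^ 2) - L * ‖x - y‖ + lam * L ^ 2 / (2 * ρ)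
        = (ρ * ‖x - y‖ - lam * L) ^ 2 / (2 * lam * ρ) := by
      field_simp
      ring
    have hnonneg : 0 ≤ (ρ * ‖x - y‖ - lam * L) ^ 2 / (2 * lam * ρ) := by positivity
    linarith
  refine ⟨le_ciInf lower, ?_⟩
  refine (ciInf_le ⟨_, Set.forall_mem_range.2 lower⟩ x).trans_eq ?_
  simp [hx]

/-- A probability measure dominating `exp (-c)` times another one is within `c` of it in total
variation. -/
lemma tvDist_le_of_le_exp_mul {α : Type*} [MeasurableSpace α] {μ ν : Measure α}
    [IsProbabilityMeasure μ] [IsProbabilityMeasure ν] {c : ℝ} (hc : 0 ≤ c)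
    (h : ∀ A, MeasurableSet A → ν A ≤ ENNReal.ofReal (Real.exp c) * μ A) :
    tvDist μ ν ≤ c := by
  have one_sided : ∀ A, MeasurableSet A → ν.real A - μ.real A ≤ c := by
    intro A hA
    have hreal : ν.real A ≤ Real.exp c * μ.real A := by
      have := ENNReal.toReal_mono (by finiteness) (h A hA)
      rwa [ENNReal.toReal_mul, ENNReal.toReal_ofReal (Real.exp_pos c).le] at this
    have hmul : Real.exp (-c) * ν.real A ≤ μ.real A := by
      calc Real.exp (-c) * ν.real A ≤ Real.exp (-c) * (Real.exp c * μ.real A) := by gcongr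
        _ = μ.real A := by rw [← mul_assoc, ← Real.exp_add]; simp
    have hexp : 1 - c ≤ Real.exp (-c) := by linarith [Real.add_one_le_exp (-c)]
    nlinarith [measureReal_nonneg (μ := ν) (s := A), measureReal_le_one (μ := ν) (s := A)]
  have : Nonempty {A : Set α // MeasurableSet A} := ⟨⟨∅, MeasurableSet.empty⟩⟩
  refine ciSup_le fun A => abs_le.2 ?_
  have hA := one_sided A.1 A.2
  have hAc := one_sided A.1ᶜ A.2.compl
  rw [probReal_compl_eq_one_sub A.2, probReal_compl_eq_one_sub A.2] at hAc
  simp only [measureReal_def] at hA hAc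
  constructor <;> linarith

lemma isProbabilityMeasure_withDensity_div_lintegral {α : Type*} [MeasurableSpace α]
    {μ : Measure α} {p : α → ℝ≥0∞} (h0 : ∫⁻ x, p x ∂μ ≠ 0) (htop : ∫⁻ x, p x ∂μ ≠ ∞) :
    IsProbabilityMeasure (μ.withDensity fun x => p x / ∫⁻ y, p y ∂μ) := by
  refine ⟨?_⟩
  rw [withDensity_apply _ MeasurableSet.univ, Measure.restrict_univ]
  simp only [div_eq_mul_inv]
  rw [lintegral_mul_const' _ _ (ENNReal.inv_ne_top.2 h0), ENNReal.mul_inv_cancel h0 htop]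

/-- Normalizing two densities with `p ≤ q ≤ exp c * p` gives probability measures within `c` of
each other in total variation. -/
lemma tvDist_withDensity_div_lintegral_le {α : Type*} [MeasurableSpace α] {μ : Measure α}
    {p q : α → ℝ≥0∞} {c : ℝ} (hc : 0 ≤ c) (h0 : ∫⁻ x, p x ∂μ ≠ 0) (htop : ∫⁻ x, p x ∂μ ≠ ∞)
    (hpq : ∀ x, p x ≤ q x) (hqp : ∀ x, q x ≤ ENNReal.ofReal (Real.exp c) * p x) :
    tvDist (μ.withDensity fun x => q x / ∫⁻ y, q y ∂μ)
      (μ.withDensity fun x => p x / ∫⁻ y, p y ∂μ) ≤ c := by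
  have hle : ∫⁻ x, q x ∂μ ≤ ENNReal.ofReal (Real.exp c) * ∫⁻ x, p x ∂μ := by
    rw [← lintegral_const_mul' _ _ ENNReal.ofReal_ne_top]
    exact lintegral_mono hqp
  have hq0 : ∫⁻ x, q x ∂μ ≠ 0 := ((pos_iff_ne_zero.2 h0).trans_le (lintegral_mono hpq)).ne'
  have hqtop : ∫⁻ x, q x ∂μ ≠ ∞ := ne_top_of_le_ne_top (by finiteness) hle
  have := isProbabilityMeasure_withDensity_div_lintegral h0 htop
  have := isProbabilityMeasure_withDensity_div_lintegral hq0 hqtop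
  refine tvDist_le_of_le_exp_mul hc fun A hA => ?_
  rw [withDensity_apply _ hA, withDensity_apply _ hA,
    ← lintegral_const_mul' _ _ ENNReal.ofReal_ne_top]
  refine lintegral_mono fun x => ?_
  have hinv : (∫⁻ y, p y ∂μ)⁻¹ ≤ ENNReal.ofReal (Real.exp c) * (∫⁻ y, q y ∂μ)⁻¹ := by
    rw [← div_eq_mul_inv, ENNReal.le_div_iff_mul_le (Or.inl hq0) (Or.inl hqtop), mul_comm,
      ← div_eq_mul_inv]
    exact ENNReal.div_le_of_le_mul hle
  calc p x / ∫⁻ y, p y ∂μ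
      ≤ q x * (ENNReal.ofReal (Real.exp c) * (∫⁻ y, q y ∂μ)⁻¹) := mul_le_mul' (hpq x) hinv
    _ = ENNReal.ofReal (Real.exp c) * (q x / ∫⁻ y, q y ∂μ) := by
      rw [div_eq_mul_inv, mul_left_comm]

/-- With `ψ` `ρ`-strongly convex and `g` `L`-Lipschitz, the Gibbs measures for the
potentials `f + g` and `f + env_{λ,g}^ψ` satisfy `‖π_λ^ψ − π‖_TV ≤ λ L² / ρ`. -/
theorem stmt6 {d : ℕ} (ρ : ℝ) (hρ : 0 < ρ)
    (ψ : EuclideanSpace ℝ (Fin d) → ℝ)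
    (hdiff : Differentiable ℝ ψ)
    (hsc : ∀ y ytil : EuclideanSpace ℝ (Fin d),
      ψ ytil + ⟪gradient ψ ytil, y - ytil⟫ + ρ / 2 * ‖y - ytil‖ ^ 2 ≤ ψ y)
    (L : ℝ) (hL : 0 ≤ L)
    (g : EuclideanSpace ℝ (Fin d) → ℝ)
    (hg : ∀ x y, |g x - g y| ≤ L * ‖x - y‖)
    (f : EuclideanSpace ℝ (Fin d) → ℝ) (hf : Measurable f)
    (hpos : 0 < ∫⁻ x, ENNReal.ofReal (Real.exp (-(f x + g x))))
    (hfin : (∫⁻ x, ENNReal.ofReal (Real.exp (-(f x + g x)))) < ∞)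
    (lam : ℝ) (hlam : 0 < lam)
    (env : EuclideanSpace ℝ (Fin d) → ℝ)
    (henv : env = leftEnv ψ g lam ∨ env = rightEnv ψ g lam)
    (π πlam : Measure (EuclideanSpace ℝ (Fin d)))
    (hπ : π = volume.withDensity fun x =>
      ENNReal.ofReal (Real.exp (-(f x + g x))) /
        ∫⁻ y, ENNReal.ofReal (Real.exp (-(f y + g y))))
    (hπlam : πlam = volume.withDensity fun x =>
      ENNReal.ofReal (Real.exp (-(f x + env x))) /
        ∫⁻ y, ENNReal.ofReal (Real.exp (-(f y + env y)))) :
    tvDist πlam π ≤ lam * L ^ 2 / ρ := by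
  have hD : ∀ x y, ρ / 2 * ‖x - y‖ ^ 2 ≤ bregmanDiv ψ x y := by
    intro x y
    have := hsc x y
    unfold bregmanDiv
    linarith
  have henv_mem : ∀ x, env x ∈ Set.Icc (g x - lam * L ^ 2 / (2 * ρ)) (g x) := by
    intro x
    rcases henv with rfl | rfl
    · exact iInf_add_mul_mem_Icc (B := fun y => bregmanDiv ψ y x) hρ hlam hg
        (bregmanDiv_self ψ x) fun y => by rw [norm_sub_rev]; exact hD y x
    · exact iInf_add_mul_mem_Icc (B := fun y => bregmanDiv ψ x y) hρ hlam hg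
        (bregmanDiv_self ψ x) fun y => hD x y
  have hc : 0 ≤ lam * L ^ 2 / (2 * ρ) := by positivity
  have htv : tvDist πlam π ≤ lam * L ^ 2 / (2 * ρ) := by
    rw [hπ, hπlam]
    refine tvDist_withDensity_div_lintegral_le hc hpos.ne' hfin.ne (fun x => ?_) fun x => ?_
    · gcongr
      exact (henv_mem x).2
    · rw [← ENNReal.ofReal_mul (Real.exp_pos _).le, ← Real.exp_add]
      gcongr
      linarith [(henv_mem x).1]
  have hhalf : lam * L ^ 2 / ρ = 2 * (lam * L ^ 2 / (2 * ρ)) := by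
    field_simp
  linarith
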